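/- Let ν be a T-invariant Borel probability measure on X that is a weak Gibbs measure for φ ∈ C(X). Then −∫ φ dν ≤ h(T,ν), where h(T,ν) is the Kolmogorov–Sinai entropy of ν. -/

import Mathlib

open MeasureTheory Filter Topology Set
open scoped ENNReal NNReal

variable {X : Type*} [MetricSpace X] [CompactSpace X] [Nonempty X]
  [MeasurableSpace X] [BorelSpace X]

/-- The dynamical (Bowen) ball `B_m(x, ε)`. -/
def dynBall (T : X → X) (m : ℕ) (x : X) (ε : ℝ) : Set X :=
  {y | ∀ k < m, dist (T^[k] x) (T^[k] y) ≤ ε}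

/-- `∫ φ dE_m(x)`, the integral of `φ` against the empirical measure,
i.e. the Birkhoff average `(1/m) ∑_{k<m} φ(T^k x)`. -/
noncomputable def birkhoffAvg (T : X → X) (φ : X → ℝ) (m : ℕ) (x : X) : ℝ :=
  (∑ k ∈ Finset.range m, φ (T^[k] x)) / m

/-- `ν` is a weak Gibbs measure for `φ`. -/
def IsWeakGibbs (T : X → X) (ν : Measure X) (φ : X → ℝ) : Prop :=
  ∀ δ : ℝ, 0 < δ → ∃ εδ : ℝ, 0 < εδ ∧ ∀ ε : ℝ, 0 < ε → ε ≤ εδ →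
    ∃ N : ℕ, ∀ m ≥ N, ∀ x : X,
      -δ ≤ Real.log (ν (dynBall T m x ε)).toReal / m - birkhoffAvg T φ m x ∧
        Real.log (ν (dynBall T m x ε)).toReal / m - birkhoffAvg T φ m x ≤ δ

/-- The empirical measure `E_m(x) = (1/m) ∑_{k<m} δ_{T^k x}` as a Borel
probability measure (junk value `δ_x` for `m = 0`). -/
noncomputable def empMeasure (T : X → X) (m : ℕ) (x : X) : ProbabilityMeasure X :=
  if h : m = 0 then ⟨Measure.dirac x, inferInstance⟩
  else
    ⟨(m : ℝ≥0∞)⁻¹ • ∑ k ∈ Finset.range m, Measure.dirac (T^[k] x), by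
      constructor
      simp only [Measure.smul_apply, Measure.coe_finset_sum, Finset.sum_apply,
        measure_univ, Finset.sum_const, Finset.card_range, nsmul_eq_mul, mul_one, smul_eq_mul]
      exact ENNReal.inv_mul_cancel (by exact_mod_cast h) (ENNReal.natCast_ne_top m)⟩

/-- The entropy of `ν` relative to the finite measurable partition given by the
fibers of `P : X → Fin p`, defined (following Fekete's lemma) as
`inf_n H(P ∨ T⁻¹P ∨ ⋯ ∨ T^{-n+1}P)/n`. -/
noncomputable def partEntropy (T : X → X) (ν : Measure X) {p : ℕ} (P : X → Fin p) : ℝ :=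
  ⨅ n : ℕ, (∑ s : Fin (n + 1) → Fin p,
    Real.negMulLog ((ν {y | ∀ k : Fin (n + 1), P (T^[(k : ℕ)] y) = s k}).toReal)) / (n + 1)

/-- The Kolmogorov–Sinai (metric) entropy `h(T, ν)`: the supremum of the
partition entropies over all finite measurable partitions. -/
noncomputable def metricEntropy (T : X → X) (ν : Measure X) : ℝ :=
  ⨆ p : ℕ, ⨆ P : {P : X → Fin p // ∀ i, MeasurableSet (P ⁻¹' {i})}, partEntropy T ν P.1

/-!
The cells of the `n`-th refinement of a partition of diameter at most `ε` lie in dynamical balls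
`B_n(y, ε)`, so the upper weak Gibbs bound makes the Shannon entropy of the `n`-itinerary at least
`n (-∫ φ dν - δ)`.

As a real-valued supremum, `metricEntropy` is only meaningful once the partition entropies are
bounded. For this, Gibbs' inequality compares the law of the `n`-itinerary with the law obtained by
reading the symbols of a `ν`-random orbit through a noisy channel. The latter charges the itinerary
of `y` at least by `ν (B_n(y, ε))`, which the lower weak Gibbs bound controls, times a factor whose
logarithm is a Birkhoff sum over the orbit of `y`.
-/

section Entropy

variable {Ω S S' : Type*} [MeasurableSpace Ω] {ν : Measure Ω}

/-- The Shannon entropy (in nats) of the finite-valued random variable `σ` under `ν`. -/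
noncomputable def shannonEntropy [Fintype S] (ν : Measure Ω) (σ : Ω → S) : ℝ :=
  ∑ s, Real.negMulLog (ν.real (σ ⁻¹' {s}))

/-- The information function of the partition into fibers of `σ`: minus the logarithm of the mass of
the fiber through `y`. On fibers of mass zero it takes the junk value `-log 0 = 0`. -/
noncomputable def information (ν : Measure Ω) (σ : Ω → S) (y : Ω) : ℝ :=
  -Real.log (ν.real (σ ⁻¹' {σ y}))

lemma ae_measureReal_fiber_pos [Countable S] [IsFiniteMeasure ν] (σ : Ω → S) :
    ∀ᵐ y ∂ν, 0 < ν.real (σ ⁻¹' {σ y}) := by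
  have avoids_null_fibers : ∀ᵐ y ∂ν, ∀ s, ν.real (σ ⁻¹' {s}) = 0 → σ y ≠ s := by
    refine ae_all_iff.2 fun s => ?_
    by_cases hs : ν.real (σ ⁻¹' {s}) = 0
    · filter_upwards [measure_eq_zero_iff_ae_notMem.1 ((measureReal_eq_zero_iff).1 hs)] with y hy _
      exact hy
    · exact Eventually.of_forall fun y h => absurd h hs
  filter_upwards [avoids_null_fibers] with y hy
  exact measureReal_nonneg.lt_of_ne' fun h => hy _ h rfl

lemma shannonEntropy_nonneg [Fintype S] [IsZeroOrProbabilityMeasure ν] (σ : Ω → S) :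
    0 ≤ shannonEntropy ν σ :=
  Finset.sum_nonneg fun _ _ => Real.negMulLog_nonneg measureReal_nonneg measureReal_le_one

lemma shannonEntropy_equiv_comp [Fintype S] [Fintype S'] (e : S ≃ S') (σ : Ω → S) :
    shannonEntropy ν (e ∘ σ) = shannonEntropy ν σ := by
  rw [shannonEntropy, ← e.sum_comp]
  refine Finset.sum_congr rfl fun s _ => ?_
  rw [preimage_comp, ← image_singleton, e.preimage_image]

variable [MeasurableSpace S] [MeasurableSingletonClass S]
  [MeasurableSpace S'] [MeasurableSingletonClass S']

lemma shannonEntropy_comp_measurePreserving [Fintype S] {σ : Ω → S} (hσ : Measurable σ)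
    {T : Ω → Ω} (hT : MeasurePreserving T ν ν) :
    shannonEntropy ν (σ ∘ T) = shannonEntropy ν σ := by
  refine Finset.sum_congr rfl fun s _ => ?_
  rw [preimage_comp, hT.measureReal_preimage (hσ (measurableSet_singleton s)).nullMeasurableSet]

section FiniteMeasure

variable [IsFiniteMeasure ν]

lemma integrable_comp_of_finite {E : Type*} [NormedAddCommGroup E] [Finite S] {σ : Ω → S}
    (hσ : Measurable σ) (c : S → E) : Integrable (fun y => c (σ y)) ν :=
  Integrable.of_finite.comp_measurable hσ

lemma integral_comp_eq_sum {E : Type*} [NormedAddCommGroup E] [NormedSpace ℝ E] [CompleteSpace E]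
    [Fintype S] {σ : Ω → S} (hσ : Measurable σ) (c : S → E) :
    ∫ y, c (σ y) ∂ν = ∑ s, ν.real (σ ⁻¹' {s}) • c s := by
  have hc : Integrable c (ν.map σ) := .of_finite
  rw [← integral_map hσ.aemeasurable hc.aestronglyMeasurable, integral_fintype hc]
  exact Finset.sum_congr rfl fun s _ => by
    rw [map_measureReal_apply hσ (measurableSet_singleton s)]

lemma integrable_information [Finite S] {σ : Ω → S} (hσ : Measurable σ) :
    Integrable (information ν σ) ν :=
  integrable_comp_of_finite hσ fun s => -Real.log (ν.real (σ ⁻¹' {s}))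

lemma shannonEntropy_eq_integral_information [Fintype S] {σ : Ω → S} (hσ : Measurable σ) :
    shannonEntropy ν σ = ∫ y, information ν σ y ∂ν := by
  simp only [information, integral_comp_eq_sum hσ fun s => -Real.log (ν.real (σ ⁻¹' {s})),
    shannonEntropy, Real.negMulLog, smul_eq_mul, mul_neg, neg_mul]

end FiniteMeasure

variable [IsProbabilityMeasure ν]

-- Gibbs' inequality; `F` is the length function of a code satisfying Kraft's inequality.
lemma shannonEntropy_le_integral_of_exp_neg_le [Fintype S] {σ : Ω → S} (hσ : Measurable σ)
    {q : S → ℝ} (hq_nonneg : ∀ s, 0 ≤ q s) (hq_sum : ∑ s, q s ≤ 1) {F : Ω → ℝ}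
    (hF : Integrable F ν) (hFq : ∀ᵐ y ∂ν, Real.exp (-F y) ≤ q (σ y)) :
    shannonEntropy ν σ ≤ ∫ y, F y ∂ν := by
  let ratio : S → ℝ := fun s => q s / ν.real (σ ⁻¹' {s})
  have hratio_int : Integrable (fun y => ratio (σ y)) ν := integrable_comp_of_finite hσ ratio
  have integral_ratio_le : ∫ y, ratio (σ y) ∂ν ≤ 1 := by
    rw [integral_comp_eq_sum hσ]
    refine (Finset.sum_le_sum fun s _ => ?_).trans hq_sum
    rw [smul_eq_mul, mul_div_left_comm]
    exact mul_le_of_le_one_right (hq_nonneg s) (div_self_le_one _)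
  have information_le : ∀ᵐ y ∂ν, information ν σ y ≤ F y + ratio (σ y) - 1 := by
    filter_upwards [hFq, ae_measureReal_fiber_pos σ] with y hq hp
    have exp_le : Real.exp (information ν σ y - F y) ≤ ratio (σ y) := by
      rw [information, sub_eq_add_neg, Real.exp_add, Real.exp_neg, Real.exp_log hp, inv_mul_eq_div]
      exact div_le_div_of_nonneg_right hq hp.le
    linarith [Real.add_one_le_exp (information ν σ y - F y)]
  calc shannonEntropy ν σ = ∫ y, information ν σ y ∂ν := shannonEntropy_eq_integral_information hσ
    _ ≤ ∫ y, (F y + ratio (σ y) - 1) ∂ν :=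
      integral_mono_ae (integrable_information hσ)
        ((hF.add hratio_int).sub (integrable_const 1)) information_le
    _ = ∫ y, F y ∂ν + ∫ y, ratio (σ y) ∂ν - 1 := by
      rw [integral_sub (by exact hF.add hratio_int) (integrable_const 1),
        integral_add hF hratio_int, integral_const, probReal_univ, one_smul]
    _ ≤ ∫ y, F y ∂ν := by linarith

lemma sum_measureReal_fiber [Fintype S] {σ : Ω → S} (hσ : Measurable σ) :
    ∑ s, ν.real (σ ⁻¹' {s}) = 1 := by
  rw [sum_measureReal_preimage_singleton _ fun s _ => hσ (measurableSet_singleton s),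
    Finset.coe_univ, preimage_univ, probReal_univ]

lemma shannonEntropy_prodMk_le [Fintype S] [Fintype S'] {σ : Ω → S} {τ : Ω → S'}
    (hσ : Measurable σ) (hτ : Measurable τ) :
    shannonEntropy ν (fun y => (σ y, τ y)) ≤ shannonEntropy ν σ + shannonEntropy ν τ := by
  have hsum : ∑ s : S × S', ν.real (σ ⁻¹' {s.1}) * ν.real (τ ⁻¹' {s.2}) = 1 := by
    simp only [Fintype.sum_prod_type, ← Finset.mul_sum, sum_measureReal_fiber hσ,
      sum_measureReal_fiber hτ, mul_one]
  rw [shannonEntropy_eq_integral_information hσ, shannonEntropy_eq_integral_information hτ,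
    ← integral_add (integrable_information hσ) (integrable_information hτ)]
  refine shannonEntropy_le_integral_of_exp_neg_le (hσ.prodMk hτ)
    (fun _ => mul_nonneg measureReal_nonneg measureReal_nonneg) hsum.le
    ((integrable_information hσ).add (integrable_information hτ)) ?_
  filter_upwards [ae_measureReal_fiber_pos (ν := ν) σ, ae_measureReal_fiber_pos (ν := ν) τ]
    with y hy hy'
  rw [information, information, neg_add, neg_neg, neg_neg, Real.exp_add, Real.exp_log hy,
    Real.exp_log hy']

end Entropy

section BirkhoffSum

variable {Ω E : Type*} [MeasurableSpace Ω] {ν : Measure Ω} [NormedAddCommGroup E]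
  {T : Ω → Ω} {f : Ω → E}

lemma integrable_birkhoffSum (hT : MeasurePreserving T ν ν) (hf : Integrable f ν) (n : ℕ) :
    Integrable (birkhoffSum T f n) ν :=
  integrable_finsetSum _ fun k _ => (hT.iterate k).integrable_comp_of_integrable hf

lemma integral_birkhoffSum [NormedSpace ℝ E] (hT : MeasurePreserving T ν ν) (hf : Integrable f ν)
    (n : ℕ) : ∫ y, birkhoffSum T f n y ∂ν = n • ∫ y, f y ∂ν := by
  have integral_iterate (k : ℕ) : ∫ y, f (T^[k] y) ∂ν = ∫ y, f y ∂ν := by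
    have hTk := hT.iterate k
    conv_rhs => rw [← hTk.map_eq]
    exact (integral_map hTk.aemeasurable (hTk.map_eq.symm ▸ hf.aestronglyMeasurable)).symm
  simp only [birkhoffSum]
  rw [integral_finsetSum (f := fun k y => f (T^[k] y)) _ fun k _ =>
    (hT.iterate k).integrable_comp_of_integrable hf]
  simp only [integral_iterate, Finset.sum_const, Finset.card_range]

end BirkhoffSum

section Itinerary

variable {Ω S : Type*}

/-- The first `n` symbols of the coding of the orbit of `y` under `T` by the cells of `P`. -/
def itinerary (T : Ω → Ω) (P : Ω → S) (n : ℕ) (y : Ω) : Fin n → S :=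
  fun k => P (T^[k] y)

lemma itinerary_add (T : Ω → Ω) (P : Ω → S) (m n : ℕ) :
    itinerary T P (m + n) =
      Fin.appendEquiv m n ∘ fun y => (itinerary T P m y, (itinerary T P n ∘ T^[m]) y) := by
  funext y k
  refine Fin.addCases (fun i => ?_) (fun i => ?_) k
  · simp only [itinerary, Function.comp_apply, Fin.appendEquiv_apply, Fin.append_left,
      Fin.val_castAdd]
  · simp only [itinerary, Function.comp_apply, Fin.appendEquiv_apply, Fin.append_right,
      Fin.val_natAdd, add_comm m, Function.iterate_add_apply]

variable [MeasurableSpace Ω] [MeasurableSpace S]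

lemma measurable_itinerary {T : Ω → Ω} {P : Ω → S} (hT : Measurable T) (hP : Measurable P)
    (n : ℕ) : Measurable (itinerary T P n) :=
  measurable_pi_lambda _ fun k => hP.comp (hT.iterate k)

variable [Fintype S] [MeasurableSingletonClass S] {ν : Measure Ω} [IsProbabilityMeasure ν]
  {T : Ω → Ω} {P : Ω → S}

lemma subadditive_shannonEntropy_itinerary (hT : MeasurePreserving T ν ν) (hP : Measurable P) :
    Subadditive fun n => shannonEntropy ν (itinerary T P n) := fun m n => by
  have hm := measurable_itinerary hT.measurable hP
  have hTm := hT.iterate m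
  simp only [itinerary_add T P m n, shannonEntropy_equiv_comp]
  refine (shannonEntropy_prodMk_le (hm m) ((hm n).comp hTm.measurable)).trans_eq ?_
  rw [shannonEntropy_comp_measurePreserving (hm n) hTm]

lemma le_shannonEntropy_itinerary_div_of_eventually (hT : MeasurePreserving T ν ν)
    (hP : Measurable P) {c : ℝ}
    (hc : ∀ᶠ n : ℕ in atTop, c ≤ shannonEntropy ν (itinerary T P n) / n) {n : ℕ} (hn : n ≠ 0) :
    c ≤ shannonEntropy ν (itinerary T P n) / n := by
  have hsub := subadditive_shannonEntropy_itinerary hT hP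
  have hbdd : BddBelow (range fun n : ℕ => shannonEntropy ν (itinerary T P n) / n) :=
    ⟨0, forall_mem_range.2 fun n => div_nonneg (shannonEntropy_nonneg _) n.cast_nonneg⟩
  exact (ge_of_tendsto (hsub.tendsto_lim hbdd) hc).trans (hsub.lim_le_div hbdd hn)

end Itinerary

section PartitionEntropy

variable {Ω : Type*} [MeasurableSpace Ω] {ν : Measure Ω} {T : Ω → Ω}

lemma partEntropy_le_metricEntropy {C : ℝ}
    (hC : ∀ (p : ℕ) (Q : Ω → Fin p), Measurable Q → partEntropy T ν Q ≤ C)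
    {p : ℕ} {P : Ω → Fin p} (hP : Measurable P) : partEntropy T ν P ≤ metricEntropy T ν := by
  have bound (p : ℕ) (Q : {Q : Ω → Fin p // ∀ i, MeasurableSet (Q ⁻¹' {i})}) :
      partEntropy T ν Q.1 ≤ max C 0 :=
    (hC p Q.1 (measurable_to_countable' Q.2)).trans (le_max_left C 0)
  refine (le_ciSup (f := fun Q : {Q : Ω → Fin p // ∀ i, MeasurableSet (Q ⁻¹' {i})} =>
    partEntropy T ν Q.1) ⟨max C 0, forall_mem_range.2 (bound p)⟩
    ⟨P, fun i => hP (measurableSet_singleton i)⟩).trans ?_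
  exact le_ciSup (f := fun p => ⨆ Q : {Q : Ω → Fin p // ∀ i, MeasurableSet (Q ⁻¹' {i})},
    partEntropy T ν Q.1)
    ⟨max C 0, forall_mem_range.2 fun p => Real.iSup_le (bound p) (le_max_right C 0)⟩ p

lemma partEntropy_eq_iInf_shannonEntropy (T : Ω → Ω) (ν : Measure Ω) {p : ℕ} (P : Ω → Fin p) :
    partEntropy T ν P =
      ⨅ n : ℕ, shannonEntropy ν (itinerary T P (n + 1)) / (n + 1 : ℕ) := by
  have cylinder_eq (n : ℕ) (s : Fin (n + 1) → Fin p) :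
      {y | ∀ k : Fin (n + 1), P (T^[k] y) = s k} = itinerary T P (n + 1) ⁻¹' {s} := by
    ext y
    exact funext_iff.symm
  simp only [partEntropy, shannonEntropy, cylinder_eq, Nat.cast_succ, Measure.real]

variable [IsProbabilityMeasure ν]

lemma partEntropy_le_shannonEntropy_div {p : ℕ} (P : Ω → Fin p) {n : ℕ} (hn : n ≠ 0) :
    partEntropy T ν P ≤ shannonEntropy ν (itinerary T P n) / n := by
  obtain ⟨n, rfl⟩ := Nat.exists_eq_succ_of_ne_zero hn
  rw [partEntropy_eq_iInf_shannonEntropy]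
  exact ciInf_le ⟨0, forall_mem_range.2 fun n =>
    div_nonneg (shannonEntropy_nonneg _) (Nat.cast_nonneg _)⟩ n

lemma le_partEntropy_of_eventually (hT : MeasurePreserving T ν ν) {p : ℕ} {P : Ω → Fin p}
    (hP : Measurable P) {c : ℝ}
    (hc : ∀ᶠ n : ℕ in atTop, c ≤ shannonEntropy ν (itinerary T P n) / n) :
    c ≤ partEntropy T ν P := by
  rw [partEntropy_eq_iInf_shannonEntropy]
  exact le_ciInf fun n =>
    le_shannonEntropy_itinerary_div_of_eventually hT hP hc n.succ_ne_zero

end PartitionEntropy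

section FinePartition

lemma exists_measurable_fin_dist_le_of_eq {Y : Type*} [PseudoMetricSpace Y] [MeasurableSpace Y]
    [OpensMeasurableSpace Y] (hY : TotallyBounded (univ : Set Y)) {ε : ℝ} (hε : 0 < ε) :
    ∃ (p : ℕ) (P : Y → Fin p), Measurable P ∧ ∀ x y, P x = P y → dist x y ≤ ε := by
  obtain ⟨t, ht, hcover⟩ := Metric.totallyBounded_iff.1 hY (ε / 2) (half_pos hε)
  obtain ⟨p, c, -, rfl⟩ := ht.fin_param
  rw [biUnion_range] at hcover
  let cell : Fin p → Set Y := disjointed fun i => Metric.ball (c i) (ε / 2)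
  have cell_subset_ball (i : Fin p) : cell i ⊆ Metric.ball (c i) (ε / 2) :=
    disjointed_subset _ i
  have measurableSet_cell (i : Fin p) : MeasurableSet (cell i) := by
    simp only [cell, disjointed_apply, Finset.sup_set_eq_biUnion]
    exact Metric.isOpen_ball.measurableSet.diff
      (Finset.measurableSet_biUnion _ fun j _ => Metric.isOpen_ball.measurableSet)
  have exists_mem_cell (y : Y) : ∃ i, y ∈ cell i := by
    rw [← mem_iUnion, iUnion_disjointed]
    exact hcover (mem_univ y)
  choose P hP using exists_mem_cell
  refine ⟨p, P, measurable_to_countable' fun i => ?_, fun x y hxy => ?_⟩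
  · convert measurableSet_cell i
    ext y
    refine ⟨fun hy => hy ▸ hP y, fun hy => ?_⟩
    by_contra hne
    exact disjoint_left.1 (disjoint_disjointed _ hne) (hP y) hy
  · have hx := cell_subset_ball _ (hxy ▸ hP x)
    have hy := cell_subset_ball _ (hP y)
    linarith [dist_triangle_right x y (c (P y)), Metric.mem_ball.1 hx, Metric.mem_ball.1 hy]

lemma exists_isCompact_continuousOn {Y S : Type*} [TopologicalSpace Y] [MeasurableSpace Y]
    [OpensMeasurableSpace Y] [T2Space Y] [TopologicalSpace S] [Finite S] [MeasurableSpace S]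
    [MeasurableSingletonClass S] (ν : Measure Y) [IsFiniteMeasure ν]
    [ν.InnerRegularCompactLTTop] {P : Y → S} (hP : Measurable P) {η : ℝ≥0∞} (hη : η ≠ 0) :
    ∃ K : Set Y, IsCompact K ∧ ContinuousOn P K ∧ ν Kᶜ ≤ η := by
  obtain ⟨a, ha_pos, ha_sum⟩ := ENNReal.exists_pos_sum_of_countable hη S
  have exists_compact_subset (s : S) :
      ∃ K ⊆ P ⁻¹' {s}, IsCompact K ∧ ν (P ⁻¹' {s} \ K) < a s :=
    (hP (measurableSet_singleton s)).exists_isCompact_sdiff_lt (measure_ne_top ν _)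
      (ENNReal.coe_ne_zero.2 (ha_pos s).ne')
  choose K hKP hK hνK using exists_compact_subset
  refine ⟨⋃ s, K s, isCompact_iUnion hK, ?_, ?_⟩
  · refine (locallyFinite_of_finite K).continuousOn_iUnion (fun s => (hK s).isClosed) fun s => ?_
    exact continuousOn_const.congr fun y hy => hKP s hy
  · calc ν (⋃ s, K s)ᶜ ≤ ν (⋃ s, P ⁻¹' {s} \ K s) := by
          refine measure_mono fun y hy => mem_iUnion.2 ⟨P y, rfl, fun hyK => hy ?_⟩
          exact mem_iUnion_of_mem _ hyK
      _ ≤ ∑' s, ν (P ⁻¹' {s} \ K s) := measure_iUnion_le _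
      _ ≤ ∑' s, (a s : ℝ≥0∞) := ENNReal.tsum_le_tsum fun s => (hνK s).le
      _ ≤ η := ha_sum.le

lemma exists_isCompact_forall_dist_lt_eq {Y S : Type*} [MetricSpace Y] [MeasurableSpace Y]
    [OpensMeasurableSpace Y] [Finite S] [MeasurableSpace S] [MeasurableSingletonClass S]
    (ν : Measure Y) [IsFiniteMeasure ν] [ν.InnerRegularCompactLTTop] {P : Y → S}
    (hP : Measurable P) {η : ℝ≥0∞} (hη : η ≠ 0) :
    ∃ K : Set Y, IsCompact K ∧ ν Kᶜ ≤ η ∧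
      ∃ ρ > 0, ∀ x ∈ K, ∀ y ∈ K, dist x y < ρ → P x = P y := by
  let : UniformSpace S := ⊥
  obtain ⟨K, hK, hPK, hνK⟩ := exists_isCompact_continuousOn ν hP hη
  have uniform_const : ∀ᶠ z in uniformity Y ⊓ 𝓟 (K ×ˢ K), P z.1 = P z.2 :=
    (hK.uniformContinuousOn_of_continuous hPK).eventually (mem_principal_self SetRel.id)
  rw [eventually_inf_principal] at uniform_const
  obtain ⟨ρ, hρ, h⟩ := Metric.mem_uniformity_dist.1 uniform_const
  exact ⟨K, hK, hνK, ρ, hρ, fun x hx y hy hxy => h hxy ⟨hx, hy⟩⟩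

-- `Q` is read off from a cell of a partition finer than the scale at which `P` is constant on `K`.
lemma exists_measurable_eq_of_dist_le {Y S : Type*} [MetricSpace Y] [CompactSpace Y]
    [MeasurableSpace Y] [BorelSpace Y] [Finite S] [Nonempty S] [MeasurableSpace S]
    [MeasurableSingletonClass S] (ν : Measure Y) [IsFiniteMeasure ν] {P : Y → S}
    (hP : Measurable P) {η : ℝ≥0∞} (hη : η ≠ 0) :
    ∃ (Q : Y → S) (G : Set Y) (ε₀ : ℝ), Measurable Q ∧ MeasurableSet G ∧ ν Gᶜ ≤ η ∧ 0 < ε₀ ∧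
      ∀ x ∈ G, ∀ y, dist x y ≤ ε₀ → Q y = P x := by
  obtain ⟨K, hK, hνK, ρ, hρ, hPK⟩ := exists_isCompact_forall_dist_lt_eq ν hP hη
  have hρ4 : 0 < ρ / 4 := by positivity
  obtain ⟨p, R, hR, dist_le_of_eq⟩ :=
    exists_measurable_fin_dist_le_of_eq (Y := Y) isCompact_univ.totallyBounded hρ4
  have exists_symbol (i : Fin p) :
      ∃ s : S, ∀ x ∈ K, ∀ y, R y = i → dist x y ≤ ρ / 4 → P x = s := by
    by_cases hi : ∃ x ∈ K, ∃ y, R y = i ∧ dist x y ≤ ρ / 4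
    · obtain ⟨x, hx, y, hy, hxy⟩ := hi
      refine ⟨P x, fun x' hx' y' hy' hxy' => hPK x' hx' x hx ?_⟩
      linarith [dist_triangle4 x' y' y x, dist_comm y x,
        dist_le_of_eq y' y (hy'.trans hy.symm)]
    · obtain ⟨s⟩ := ‹Nonempty S›
      exact ⟨s, fun x hx y hy hxy => absurd ⟨x, hx, y, hy, hxy⟩ hi⟩
  choose g hg using exists_symbol
  exact ⟨g ∘ R, K, ρ / 4, measurable_from_top.comp hR, hK.measurableSet, hνK, hρ4,
    fun x hx y hxy => (hg (R y) x hx y rfl hxy).symm⟩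

end FinePartition

section NoisyItinerary

variable {Ω S : Type*} [MeasurableSpace Ω] [Fintype S] {ν : Measure Ω} {T : Ω → Ω}
  {w : Ω → S → ℝ}

/-- The law of the itinerary of a `ν`-random point whose symbols are read through a noisy channel:
a point `x` is read as the symbol `i` with probability `w x i`, independently along the orbit. -/
noncomputable def noisyItineraryProb (T : Ω → Ω) (ν : Measure Ω) (w : Ω → S → ℝ) (n : ℕ)
    (s : Fin n → S) : ℝ :=
  ∫ x, ∏ k : Fin n, w (T^[k] x) (s k) ∂ν

lemma noisyItineraryProb_nonneg (hw : ∀ x, w x ∈ stdSimplex ℝ S) (n : ℕ) (s : Fin n → S) :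
    0 ≤ noisyItineraryProb T ν w n s :=
  integral_nonneg fun _ => Finset.prod_nonneg fun k _ => (hw _).1 (s k)

lemma integrable_prod_iterate [IsFiniteMeasure ν] (hT : Measurable T)
    (hw_meas : ∀ i, Measurable (w · i)) (hw : ∀ x, w x ∈ stdSimplex ℝ S) (n : ℕ)
    (s : Fin n → S) : Integrable (fun x => ∏ k : Fin n, w (T^[k] x) (s k)) ν := by
  refine .of_mem_Icc 0 1 (Finset.measurable_prod _ fun k _ =>
    (hw_meas (s k)).comp (hT.iterate k)).aemeasurable (ae_of_all _ fun x => ⟨?_, ?_⟩)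
  · exact Finset.prod_nonneg fun k _ => (hw _).1 (s k)
  · exact Finset.prod_le_one (fun k _ => (hw _).1 (s k)) fun k _ =>
      (mem_Icc_of_mem_stdSimplex (hw _) (s k)).2

variable [IsProbabilityMeasure ν]

lemma sum_noisyItineraryProb (hT : Measurable T) (hw_meas : ∀ i, Measurable (w · i))
    (hw : ∀ x, w x ∈ stdSimplex ℝ S) (n : ℕ) : ∑ s, noisyItineraryProb T ν w n s = 1 := by
  have sum_prod (x : Ω) : ∑ s : Fin n → S, ∏ k : Fin n, w (T^[k] x) (s k) = 1 := by
    rw [← Fintype.prod_sum fun (k : Fin n) i => w (T^[k] x) i]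
    exact Finset.prod_eq_one fun k _ => (hw _).2
  simp only [noisyItineraryProb]
  rw [← integral_finsetSum _ fun s _ => integrable_prod_iterate hT hw_meas hw n s]
  simp only [sum_prod, integral_const, probReal_univ, one_smul]

end NoisyItinerary

section DynamicalBall

variable {Y S : Type*} [MetricSpace Y] {T : Y → Y} {ε : ℝ}

lemma itinerary_fiber_subset_dynBall {P : Y → S} (hP : ∀ x y, P x = P y → dist x y ≤ ε) (n : ℕ)
    (y : Y) : itinerary T P n ⁻¹' {itinerary T P n y} ⊆ dynBall T n y ε :=
  fun _ hx k hk => hP _ _ (congr_fun hx.symm ⟨k, hk⟩)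

variable [MeasurableSpace Y] {ν : Measure Y}

lemma ae_measureReal_dynBall_pos [CompactSpace Y] [OpensMeasurableSpace Y] [IsFiniteMeasure ν]
    (T : Y → Y) (n : ℕ) (hε : 0 < ε) : ∀ᵐ y ∂ν, 0 < ν.real (dynBall T n y ε) := by
  obtain ⟨p, P, -, hP⟩ :=
    exists_measurable_fin_dist_le_of_eq (Y := Y) isCompact_univ.totallyBounded hε
  filter_upwards [ae_measureReal_fiber_pos (ν := ν) (itinerary T P n)] with y hy
  exact hy.trans_le (measureReal_mono (itinerary_fiber_subset_dynBall hP n y))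

variable [Fintype S] [IsProbabilityMeasure ν] {P : Y → S} {w : Y → S → ℝ} {r : Y → ℝ}

lemma exp_neg_mul_measureReal_dynBall_le (hT : Measurable T)
    (hw_meas : ∀ i, Measurable (w · i)) (hw : ∀ x, w x ∈ stdSimplex ℝ S)
    (hr : ∀ x y, dist x y ≤ ε → Real.exp (-r x) ≤ w y (P x)) (n : ℕ) (y : Y) :
    Real.exp (-birkhoffSum T r n y) * ν.real (dynBall T n y ε) ≤
      noisyItineraryProb T ν w n (itinerary T P n y) := by
  have exp_le_prod : ∀ x ∈ dynBall T n y ε,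
      Real.exp (-birkhoffSum T r n y) ≤ ∏ k : Fin n, w (T^[k] x) (itinerary T P n y k) := by
    intro x hx
    rw [birkhoffSum, Finset.sum_range, ← Finset.sum_neg_distrib, Real.exp_sum]
    exact Finset.prod_le_prod (fun _ _ => (Real.exp_pos _).le)
      fun k _ => hr _ _ (hx k k.isLt)
  refine (mul_le_mul_of_nonneg_left (measureReal_mono exp_le_prod) (Real.exp_pos _).le).trans ?_
  exact mul_meas_ge_le_integral_of_nonneg
    (ae_of_all _ fun x => Finset.prod_nonneg fun k _ => (hw _).1 _)
    (integrable_prod_iterate hT hw_meas hw n _) _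

lemma shannonEntropy_itinerary_le [MeasurableSpace S] [MeasurableSingletonClass S]
    (hT : MeasurePreserving T ν ν) (hP : Measurable P)
    (hw_meas : ∀ i, Measurable (w · i)) (hw : ∀ x, w x ∈ stdSimplex ℝ S)
    (hr_int : Integrable r ν) (hr : ∀ x y, dist x y ≤ ε → Real.exp (-r x) ≤ w y (P x))
    {n : ℕ} {F : Y → ℝ} (hF_int : Integrable F ν)
    (hF : ∀ᵐ y ∂ν, Real.exp (-F y) ≤ ν.real (dynBall T n y ε)) :
    shannonEntropy ν (itinerary T P n) ≤ ∫ y, F y ∂ν + n * ∫ y, r y ∂ν := by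
  have hSr_int : Integrable (birkhoffSum T r n) ν := integrable_birkhoffSum hT hr_int n
  rw [← nsmul_eq_mul, ← integral_birkhoffSum hT hr_int, ← integral_add hF_int hSr_int]
  refine shannonEntropy_le_integral_of_exp_neg_le (measurable_itinerary hT.measurable hP n)
    (noisyItineraryProb_nonneg hw n) (sum_noisyItineraryProb (ν := ν) hT.measurable hw_meas hw n).le
    (hF_int.add hSr_int) ?_
  filter_upwards [hF] with y hy
  rw [neg_add_rev, Real.exp_add]
  exact (mul_le_mul_of_nonneg_left hy (Real.exp_pos _).le).trans
    (exp_neg_mul_measureReal_dynBall_le hT.measurable hw_meas hw hr n y)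

end DynamicalBall

section Channel

variable {S : Type*} [Fintype S] [DecidableEq S]

/-- The distribution of a symbol that equals `i` with probability `1 / 2` and is otherwise drawn
uniformly. Used as a channel, it never excludes a symbol. -/
noncomputable def halfUniform (i j : S) : ℝ :=
  ((Fintype.card S : ℝ)⁻¹ + if i = j then 1 else 0) / 2

lemma halfUniform_mem_stdSimplex (i : S) : halfUniform i ∈ stdSimplex ℝ S := by
  have : Nonempty S := ⟨i⟩
  refine ⟨fun j => by unfold halfUniform; positivity, ?_⟩
  simp only [halfUniform]
  rw [← Finset.sum_div, Finset.sum_add_distrib, Finset.sum_const, Finset.sum_ite_eq,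
    if_pos (Finset.mem_univ _), Finset.card_univ, nsmul_eq_mul,
    mul_inv_cancel₀ (Nat.cast_ne_zero.2 Fintype.card_ne_zero)]
  norm_num

lemma half_le_halfUniform_self (i : S) : 2⁻¹ ≤ halfUniform i i := by
  have : 0 ≤ (Fintype.card S : ℝ)⁻¹ := by positivity
  rw [halfUniform, if_pos rfl]
  linarith

lemma half_mul_inv_card_le_halfUniform (i j : S) :
    2⁻¹ * (Fintype.card S : ℝ)⁻¹ ≤ halfUniform i j := by
  rw [halfUniform, inv_mul_eq_div]
  gcongr
  split_ifs <;> norm_num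

end Channel

lemma exists_channel_exp_neg_le {Y S : Type*} [MetricSpace Y] [CompactSpace Y] [MeasurableSpace Y]
    [BorelSpace Y] {ν : Measure Y} [IsProbabilityMeasure ν] [Fintype S] [Nonempty S]
    [MeasurableSpace S] [MeasurableSingletonClass S] {P : Y → S} (hP : Measurable P) :
    ∃ (w : Y → S → ℝ) (r : Y → ℝ) (ε₀ : ℝ), (∀ i, Measurable (w · i)) ∧
      (∀ x, w x ∈ stdSimplex ℝ S) ∧ Integrable r ν ∧ ∫ x, r x ∂ν ≤ Real.log 2 + 1 ∧ 0 < ε₀ ∧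
      ∀ x y, dist x y ≤ ε₀ → Real.exp (-r x) ≤ w y (P x) := by
  classical
  let c : ℝ := Fintype.card S
  have hc : 0 < c := Nat.cast_pos.2 Fintype.card_pos
  -- A wrong reading off `G` costs `log c`; with `ν Gᶜ ≤ 1 / c` it costs at most `1` on average.
  obtain ⟨Q, G, ε₀, hQ, hG, hνG, hε₀, hQP⟩ :=
    exists_measurable_eq_of_dist_le ν hP (η := (Fintype.card S : ℝ≥0∞)⁻¹)
      (ENNReal.inv_ne_zero.2 (ENNReal.natCast_ne_top _))
  let r : Y → ℝ := fun x => Real.log 2 + Gᶜ.indicator (fun _ => Real.log c) x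
  have hindicator : Integrable (Gᶜ.indicator fun _ => Real.log c) ν :=
    (integrable_const _).indicator hG.compl
  have integral_r_le : ∫ x, r x ∂ν ≤ Real.log 2 + 1 := by
    have hνG_real : ν.real Gᶜ ≤ c⁻¹ :=
      ENNReal.toReal_le_of_le_ofReal (inv_nonneg.2 hc.le)
        (by rwa [ENNReal.ofReal_inv_of_pos hc, ENNReal.ofReal_natCast])
    rw [integral_add (integrable_const _) hindicator, integral_const, probReal_univ, one_smul,
      integral_indicator_const _ hG.compl, smul_eq_mul]
    gcongr
    calc ν.real Gᶜ * Real.log c ≤ c⁻¹ * c :=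
          mul_le_mul hνG_real (Real.log_le_self hc.le) (Real.log_natCast_nonneg _)
            (inv_nonneg.2 hc.le)
      _ = 1 := inv_mul_cancel₀ hc.ne'
  refine ⟨fun y => halfUniform (Q y), r, ε₀,
    fun i => (measurable_of_finite (halfUniform · i)).comp hQ,
    fun x => halfUniform_mem_stdSimplex _, (integrable_const _).add hindicator, integral_r_le,
    hε₀, fun x y hxy => ?_⟩
  by_cases hx : x ∈ G
  · have hr : r x = Real.log 2 := by
      simp only [r, indicator_of_notMem (notMem_compl_iff.2 hx), add_zero]
    rw [hr, Real.exp_neg, Real.exp_log two_pos, ← hQP x hx y hxy]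
    exact half_le_halfUniform_self _
  · simp only [r, indicator_of_mem (mem_compl hx), neg_add, Real.exp_add, Real.exp_neg,
      Real.exp_log two_pos, Real.exp_log hc]
    exact half_mul_inv_card_le_halfUniform _ _

namespace IsWeakGibbs

variable {Y : Type*} [MetricSpace Y] [MeasurableSpace Y] {ν : Measure Y} {T : Y → Y} {φ : Y → ℝ}

lemma eventually_abs_log_sub_birkhoffSum_le (hν : IsWeakGibbs T ν φ) {δ : ℝ} (hδ : 0 < δ) :
    ∃ ε₀ > 0, ∀ ε, 0 < ε → ε ≤ ε₀ → ∀ᶠ n : ℕ in atTop, ∀ x,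
      |Real.log (ν.real (dynBall T n x ε)) - birkhoffSum T φ n x| ≤ n * δ := by
  obtain ⟨ε₀, hε₀, h⟩ := hν δ hδ
  refine ⟨ε₀, hε₀, fun ε hε hεε₀ => ?_⟩
  obtain ⟨N, hN⟩ := h ε hε hεε₀
  filter_upwards [eventually_ge_atTop N, eventually_gt_atTop 0] with n hn hn_pos x
  have hn_pos' : (0 : ℝ) < n := Nat.cast_pos.2 hn_pos
  have h_abs := abs_le.2 (hN n hn x)
  rwa [birkhoffAvg, ← sub_div, abs_div, abs_of_pos hn_pos', div_le_iff₀' hn_pos'] at h_abs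

variable [CompactSpace Y] [BorelSpace Y] [IsProbabilityMeasure ν]

lemma exists_neg_integral_sub_le_partEntropy (hν : IsWeakGibbs T ν φ)
    (hT : MeasurePreserving T ν ν) (hφ : Integrable φ ν) {δ : ℝ} (hδ : 0 < δ) :
    ∃ (p : ℕ) (P : Y → Fin p), Measurable P ∧ -∫ x, φ x ∂ν - δ ≤ partEntropy T ν P := by
  obtain ⟨ε, hε, h_log⟩ := hν.eventually_abs_log_sub_birkhoffSum_le hδ
  obtain ⟨p, P, hP, hP_dist⟩ :=
    exists_measurable_fin_dist_le_of_eq (Y := Y) isCompact_univ.totallyBounded hε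
  refine ⟨p, P, hP, le_partEntropy_of_eventually hT hP ?_⟩
  filter_upwards [h_log ε hε le_rfl, eventually_gt_atTop 0] with n hn hn_pos
  have hSφ := integrable_birkhoffSum hT hφ n
  have hitin := measurable_itinerary hT.measurable hP n
  have le_information : ∀ᵐ y ∂ν,
      -birkhoffSum T φ n y - n * δ ≤ information ν (itinerary T P n) y := by
    filter_upwards [ae_measureReal_fiber_pos (ν := ν) (itinerary T P n)] with y hy
    have log_le : Real.log (ν.real (itinerary T P n ⁻¹' {itinerary T P n y})) ≤
        Real.log (ν.real (dynBall T n y ε)) :=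
      Real.log_le_log hy (measureReal_mono (itinerary_fiber_subset_dynBall hP_dist n y))
    rw [information]
    linarith [(abs_le.1 (hn y)).2]
  rw [le_div_iff₀' (Nat.cast_pos.2 hn_pos), shannonEntropy_eq_integral_information hitin]
  calc n * (-∫ x, φ x ∂ν - δ) = ∫ y, (-birkhoffSum T φ n y - n * δ) ∂ν := by
        rw [integral_sub (by exact hSφ.neg) (integrable_const _), integral_neg,
          integral_birkhoffSum hT hφ, integral_const, probReal_univ, one_smul, nsmul_eq_mul]
        ring
    _ ≤ ∫ y, information ν (itinerary T P n) y ∂ν :=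
        integral_mono_ae (hSφ.neg.sub (integrable_const _)) (integrable_information hitin)
          le_information

lemma partEntropy_le (hν : IsWeakGibbs T ν φ) (hT : MeasurePreserving T ν ν)
    (hφ : Integrable φ ν) {p : ℕ} {P : Y → Fin p} (hP : Measurable P) :
    partEntropy T ν P ≤ -∫ x, φ x ∂ν + Real.log 2 + 2 := by
  have : Nonempty Y := ν.nonempty_of_neZero
  have : Nonempty (Fin p) := .map P ‹_›
  obtain ⟨w, r, ε₀, hw_meas, hw, hr_int, integral_r_le, hε₀, hr⟩ :=
    exists_channel_exp_neg_le (ν := ν) hP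
  obtain ⟨ε₁, hε₁, h_log⟩ := hν.eventually_abs_log_sub_birkhoffSum_le one_pos
  obtain ⟨n, hn_pos, hn⟩ := ((eventually_gt_atTop 0).and
    (h_log (min ε₀ ε₁) (lt_min hε₀ hε₁) (min_le_right _ _))).exists
  have hn_pos' : (0 : ℝ) < n := Nat.cast_pos.2 hn_pos
  have hSφ := integrable_birkhoffSum hT hφ n
  have exp_le : ∀ᵐ y ∂ν,
      Real.exp (-(n - birkhoffSum T φ n y)) ≤ ν.real (dynBall T n y (min ε₀ ε₁)) := by
    filter_upwards [ae_measureReal_dynBall_pos T n (lt_min hε₀ hε₁)] with y hy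
    rw [← Real.le_log_iff_exp_le hy]
    linarith [(abs_le.1 (hn y)).1]
  have entropy_le := shannonEntropy_itinerary_le hT hP hw_meas hw hr_int
    (fun x y hxy => hr x y (hxy.trans (min_le_left _ _)))
    (F := fun y => n - birkhoffSum T φ n y) ((integrable_const _).sub hSφ) exp_le
  rw [integral_sub (integrable_const _) hSφ, integral_const, probReal_univ, one_smul,
    integral_birkhoffSum hT hφ, nsmul_eq_mul] at entropy_le
  refine (partEntropy_le_shannonEntropy_div P hn_pos.ne').trans ((div_le_iff₀' hn_pos').2 ?_)
  linarith [mul_le_mul_of_nonneg_left integral_r_le hn_pos'.le]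

end IsWeakGibbs

theorem weakGibbs_neg_integral_le_entropy_general {Y : Type*} [MetricSpace Y] [CompactSpace Y]
    [MeasurableSpace Y] [BorelSpace Y] {T : Y → Y} {φ : Y → ℝ} {ν : Measure Y}
    [IsProbabilityMeasure ν] (hT : MeasurePreserving T ν ν) (hφ : Integrable φ ν)
    (hν : IsWeakGibbs T ν φ) : -∫ x, φ x ∂ν ≤ metricEntropy T ν := by
  refine le_of_forall_sub_le fun δ hδ => ?_
  obtain ⟨p, P, hP, le_partEntropy⟩ := hν.exists_neg_integral_sub_le_partEntropy hT hφ hδ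
  exact le_partEntropy.trans
    (partEntropy_le_metricEntropy (fun _ _ hQ => hν.partEntropy_le hT hφ hQ) hP)

/-- for an invariant weak Gibbs measure `ν` for `φ`,
`−∫ φ dν ≤ h(T,ν)`. -/
theorem weakGibbs_neg_integral_le_entropy
    {X : Type*} [MetricSpace X] [CompactSpace X] [Nonempty X]
    [MeasurableSpace X] [BorelSpace X]
    (T : X → X) (hT : Continuous T) (hTsurj : Function.Surjective T)
    (φ : X → ℝ) (hφ : Continuous φ)
    (ν : Measure X) [IsProbabilityMeasure ν] (hinv : Measure.map T ν = ν)
    (hν : IsWeakGibbs T ν φ) :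
    - ∫ x, φ x ∂ν ≤ metricEntropy T ν := by
  exact weakGibbs_neg_integral_le_entropy_general ⟨hT.measurable, hinv⟩
    (hφ.integrable_of_hasCompactSupport (.of_compactSpace φ)) hν
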